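/- Under the hypotheses of Lemma variance (p, q independent i.i.d.-uniform grids of P points on a unit-measure domain D; μ₁, μ₂ bounded densities; ẑ ∈ ℂ^m fixed; m fixed frequencies), the variance of the scalar Z = ⟨B_p μ₁(p), B_q μ₂(q) − ẑ⟩ satisfies E|Z|² − |E Z|² = (1/P²)·⟨|μ₁|², |μ₂|²⟩_{L²(D), |S*𝟏|²} + (1/P)·C(μ₁, μ₂, ẑ), where C(μ₁,μ₂,ẑ) is a quantity depending only on μ₁, μ₂, ẑ, S and bounded independently of P (up to factors (P−1)/P and (2P−1)/P which are in [0,2]). In particular, if μ₁, μ₂ are bounded in L²(D) and ẑ is fixed, then E|Z − E Z|² = O(1/P) as P → ∞. -/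

import Mathlib

/-!
Expanding the sketches, `Z = P⁻² ∑_{r,s} (K(p_r, q_s) - h(p_r))` with
`K(x, y) = μ₁(x) μ₂(y) conj (S*𝟏 (x - y))` and `h(x) = μ₁(x) conj (S*ẑ (x))` (`hinn_dsk`), so the
claim is a variance formula for a two-sample statistic of a bounded kernel.

For one grid of `P` independent points, independence of distinct points gives
`E|∑_r φ(p_r)|² = P E|φ|² + P (P - 1) |E φ|²` (`integral_normSq_sum_eval_pi`). Applying this in `p`
with `q` frozen, and then in `q` to each of the two resulting terms, yields for `k = K - h`
the second moment
`P² E|k|² + P² (P - 1) (E_x |E_y k|² + E_y |E_x k|²) + P² (P - 1)² |E k|²`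
(`two_grid_second_moment`). Expanding the squares of `K - h` and subtracting the squared mean gives
`two_grid_variance`: since `h` depends on `x` only, its terms in `E|k|²` and in `E_x |E_y k|²`
agree, so their weights `P²` and `P² (P - 1)` add up to `P³`.

The partial integrals of `K` are `∫ K(x, y) dx = μ₂(y) S*Sμ₁(y)` and
`∫ K(x, y) dy = μ₁(x) conj (S*Sμ₂ (x))`, by the adjointness of `S*` and `S`
(`integral_mul_conj_Sstar`, `integral_mul_Sstar`).
-/

open MeasureTheory Complex
noncomputable section

/-- Standard inner product on `Fin d → ℝ`. -/
def ip {d : ℕ} (w x : Fin d → ℝ) : ℝ := ∑ i, w i * x i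

/-- The Fourier-moment sketching operator: `(Sμ)_l = ∫_D e^{-i⟨ω_l,x⟩} μ(x) dx`. -/
def sk {d : ℕ} (m : ℕ) (ω : Fin m → Fin d → ℝ) (D : Set (Fin d → ℝ))
    (μ : (Fin d → ℝ) → ℂ) : Fin m → ℂ :=
  fun l => ∫ x in D, Complex.exp (-Complex.I * (ip (ω l) x : ℂ)) * μ x

/-- The discretized sketch on a grid `p`: `(B_p μ(p))_l = (1/P) ∑_r e^{-i⟨ω_l,p_r⟩} μ(p_r)`. -/
def dsk {d : ℕ} (m P : ℕ) (ω : Fin m → Fin d → ℝ)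
    (μ : (Fin d → ℝ) → ℂ) (p : Fin P → (Fin d → ℝ)) : Fin m → ℂ :=
  fun l => (∑ r : Fin P, Complex.exp (-Complex.I * (ip (ω l) (p r) : ℂ)) * μ (p r)) / (P : ℂ)

/-- The Hermitian inner product on `ℂ^m`. -/
def hinn {m : ℕ} (u v : Fin m → ℂ) : ℂ := ∑ l, u l * (starRingEnd ℂ) (v l)

/-- The adjoint map `S*z : x ↦ ∑_g z_g e^{i⟨ω_g,x⟩}`. -/
def Sstar {d : ℕ} (m : ℕ) (ω : Fin m → Fin d → ℝ) (z : Fin m → ℂ) (x : Fin d → ℝ) : ℂ :=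
  ∑ g, z g * Complex.exp (Complex.I * (ip (ω g) x : ℂ))

section Grid

/-! ### Moments of sums over one grid -/

variable {E : Type*} [MeasurableSpace E]

lemma integral_eval_pi {F : Type*} [NormedAddCommGroup F] [NormedSpace ℝ F]
    (ν : Measure E) [IsProbabilityMeasure ν] {P : ℕ} (r : Fin P) {φ : E → F}
    (hφ : StronglyMeasurable φ) :
    ∫ p, φ (p r) ∂(Measure.pi fun _ : Fin P => ν) = ∫ x, φ x ∂ν := by
  have h := measurePreserving_eval (fun _ : Fin P => ν) r
  conv_rhs => rw [← h.map_eq]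
  exact (integral_map (measurable_pi_apply r).aemeasurable hφ.aestronglyMeasurable).symm

lemma integral_mul_eval_pi (ν : Measure E) [IsProbabilityMeasure ν] {P : ℕ} {r s : Fin P}
    (hrs : r ≠ s) {φ ψ : E → ℂ} (hφ : Measurable φ) (hψ : Measurable ψ) :
    ∫ p, φ (p r) * ψ (p s) ∂(Measure.pi fun _ : Fin P => ν)
      = (∫ x, φ x ∂ν) * ∫ x, ψ x ∂ν := by
  have hi : ProbabilityTheory.iIndepFun (fun (i : Fin P) (p : Fin P → E) => p i)
      (Measure.pi fun _ : Fin P => ν) :=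
    ProbabilityTheory.iIndepFun_pi (X := fun (_ : Fin P) (x : E) => x)
      (fun _ => measurable_id.aemeasurable)
  have h2 := (hi.indepFun hrs).comp hφ hψ
  have h3 := h2.integral_fun_mul_eq_mul_integral
    (hφ.comp (measurable_pi_apply r)).aestronglyMeasurable
    (hψ.comp (measurable_pi_apply s)).aestronglyMeasurable
  simp only [Function.comp_apply] at h3
  rw [h3, integral_eval_pi ν r hφ.stronglyMeasurable, integral_eval_pi ν s hψ.stronglyMeasurable]

lemma integral_sum_eval_pi (ν : Measure E) [IsProbabilityMeasure ν] (P : ℕ) {φ : E → ℂ}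
    (hφ : Measurable φ) {B : ℝ} (hB : ∀ x, ‖φ x‖ ≤ B) :
    ∫ p, ∑ r, φ (p r) ∂(Measure.pi fun _ : Fin P => ν) = P * ∫ x, φ x ∂ν := by
  rw [integral_finsetSum]
  · simp [integral_eval_pi ν _ hφ.stronglyMeasurable]
  · intro r _
    exact .of_bound (hφ.comp (measurable_pi_apply r)).aestronglyMeasurable B
      (.of_forall fun p => hB _)

/-- One-grid second moment: the diagonal of the double sum contributes `P E|φ|²`, and each of the
`P (P - 1)` off-diagonal terms factors by independence. -/
lemma integral_normSq_sum_eval_pi (ν : Measure E) [IsProbabilityMeasure ν] (P : ℕ) {φ : E → ℂ}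
    (hφ : Measurable φ) {B : ℝ} (hB : ∀ x, ‖φ x‖ ≤ B) :
    ∫ p, normSq (∑ r, φ (p r)) ∂(Measure.pi fun _ : Fin P => ν)
      = P * (∫ x, normSq (φ x) ∂ν) + P * (P - 1) * normSq (∫ x, φ x ∂ν) := by
  have hc : Measurable fun x => (starRingEnd ℂ) (φ x) := by fun_prop
  apply Complex.ofReal_injective
  rw [← integral_complex_ofReal]
  have hexp : ∀ p : Fin P → E, ((normSq (∑ r, φ (p r)) : ℝ) : ℂ)
      = ∑ r, ∑ s, φ (p r) * (starRingEnd ℂ) (φ (p s)) := by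
    intro p
    rw [← mul_conj, map_sum, Finset.sum_mul_sum]
  simp_rw [hexp]
  have hint : ∀ r s : Fin P, Integrable (fun p : Fin P → E => φ (p r) * (starRingEnd ℂ) (φ (p s)))
      (Measure.pi fun _ : Fin P => ν) := by
    intro r s
    refine .of_bound ((hφ.comp (measurable_pi_apply r)).mul
      (hc.comp (measurable_pi_apply s))).aestronglyMeasurable (B * B) (.of_forall fun p => ?_)
    rw [norm_mul, RCLike.norm_conj]
    exact mul_le_mul (hB _) (hB _) (norm_nonneg _) ((norm_nonneg _).trans (hB (p r)))
  have hterm : ∀ r s : Fin P, ∫ p, φ (p r) * (starRingEnd ℂ) (φ (p s))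
      ∂(Measure.pi fun _ : Fin P => ν)
      = (if r = s then ((∫ x, normSq (φ x) ∂ν : ℝ) : ℂ) - (normSq (∫ x, φ x ∂ν) : ℝ) else 0)
        + (normSq (∫ x, φ x ∂ν) : ℝ) := by
    intro r s
    split_ifs with h
    · subst h
      rw [sub_add_cancel, integral_eval_pi (φ := fun x => φ x * (starRingEnd ℂ) (φ x)) ν r
        (hφ.mul hc).stronglyMeasurable, ← integral_complex_ofReal]
      simp_rw [mul_conj]
    · rw [integral_mul_eval_pi ν h hφ hc, integral_conj, mul_conj, zero_add]
  rw [integral_finsetSum _ fun r _ => integrable_finsetSum _ fun s _ => hint r s]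
  simp_rw [integral_finsetSum _ fun s _ => hint _ s, hterm, Finset.sum_add_distrib]
  simp
  ring


/-! ### Kernels on two independent grids -/

lemma measurable_integral_right (ν : Measure E) [IsProbabilityMeasure ν] {k : E → E → ℂ}
    (hk : Measurable (Function.uncurry k)) : Measurable fun x => ∫ y, k x y ∂ν :=
  hk.stronglyMeasurable.integral_prod_right.measurable

lemma measurable_integral_left (ν : Measure E) [IsProbabilityMeasure ν] {k : E → E → ℂ}
    (hk : Measurable (Function.uncurry k)) : Measurable fun y => ∫ x, k x y ∂ν :=
  measurable_integral_right ν (k := fun y x => k x y) (hk.comp measurable_swap)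

lemma norm_integral_le_of_bound (ν : Measure E) [IsProbabilityMeasure ν] {φ : E → ℂ} {B : ℝ}
    (hB : ∀ x, ‖φ x‖ ≤ B) : ‖∫ x, φ x ∂ν‖ ≤ B := by
  simpa using norm_integral_le_of_norm_le_const (μ := ν) (.of_forall hB)

lemma normSq_le_of_norm_le {w : ℂ} {B : ℝ} (h : ‖w‖ ≤ B) : ‖normSq w‖ ≤ B ^ 2 := by
  rw [Real.norm_of_nonneg (normSq_nonneg w), normSq_eq_norm_sq]
  gcongr

lemma integrable_normSq {α : Type*} [MeasurableSpace α] (μ : Measure α) [IsFiniteMeasure μ]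
    {φ : α → ℂ} (hφ : Measurable φ) {B : ℝ} (hB : ∀ a, ‖φ a‖ ≤ B) :
    Integrable (fun a => normSq (φ a)) μ :=
  .of_bound (continuous_normSq.measurable.comp hφ).aestronglyMeasurable (B ^ 2)
    (.of_forall fun a => normSq_le_of_norm_le (hB a))

/-- `E|φ - c|² = E|φ|² + |c|² - 2 Re (E φ · conj c)`. -/
lemma integral_normSq_sub_const (ν : Measure E) [IsProbabilityMeasure ν] {φ : E → ℂ}
    (hφ : Measurable φ) {B : ℝ} (hB : ∀ x, ‖φ x‖ ≤ B) (c : ℂ) :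
    ∫ x, normSq (φ x - c) ∂ν = (∫ x, normSq (φ x) ∂ν) + normSq c
      - 2 * ((∫ x, φ x ∂ν) * (starRingEnd ℂ) c).re := by
  have iφ : Integrable φ ν := .of_bound hφ.aestronglyMeasurable B (.of_forall hB)
  have iN := integrable_normSq ν hφ hB
  have hre : ∫ x, (φ x * (starRingEnd ℂ) c).re ∂ν
      = ((∫ x, φ x ∂ν) * (starRingEnd ℂ) c).re := by
    rw [← integral_mul_const]
    exact integral_re (iφ.mul_const _)
  have iN' : Integrable (fun x => normSq (φ x) + normSq c) ν := iN.add (integrable_const _)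
  have iR : Integrable (fun x => 2 * (φ x * (starRingEnd ℂ) c).re) ν :=
    (iφ.mul_const _).re.const_mul 2
  simp_rw [normSq_sub]
  rw [integral_sub iN' iR, integral_add iN (integrable_const _), integral_const_mul, hre]
  simp

lemma two_grid_mean (ν : Measure E) [IsProbabilityMeasure ν] (P : ℕ) {k : E → E → ℂ}
    (hk : Measurable (Function.uncurry k)) {B : ℝ} (hB : ∀ x y, ‖k x y‖ ≤ B) :
    ∫ pq, ∑ r, ∑ s, k (pq.1 r) (pq.2 s)
        ∂((Measure.pi fun _ : Fin P => ν).prod (Measure.pi fun _ : Fin P => ν))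
      = P ^ 2 * ∫ y, ∫ x, k x y ∂ν ∂ν := by
  have hky : ∀ y, Measurable fun x => k x y := fun y => hk.comp measurable_prodMk_right
  have hm : Measurable fun pq : (Fin P → E) × (Fin P → E) => ∑ r, ∑ s, k (pq.1 r) (pq.2 s) :=
    Finset.measurable_sum _ fun r _ => Finset.measurable_sum _ fun s _ =>
      hk.comp (by fun_prop : Measurable fun pq : (Fin P → E) × (Fin P → E) => (pq.1 r, pq.2 s))
  have hsum : ∀ (q : Fin P → E) x, ‖∑ s, k x (q s)‖ ≤ P * B := fun q x =>
    (norm_sum_le_of_le _ fun s _ => hB x (q s)).trans (by simp)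
  rw [integral_prod_symm _ (.of_bound hm.aestronglyMeasurable (P * (P * B)) (.of_forall fun pq =>
    (norm_sum_le_of_le _ fun r _ => hsum pq.2 (pq.1 r)).trans (by simp)))]
  have hin : ∀ q : Fin P → E, ∫ p, ∑ r, ∑ s, k (p r) (q s) ∂(Measure.pi fun _ : Fin P => ν)
      = P * ∑ s, ∫ x, k x (q s) ∂ν := by
    intro q
    rw [integral_sum_eval_pi ν P (φ := fun x => ∑ s, k x (q s))
      (Finset.measurable_sum _ fun s _ => hky (q s)) (hsum q), integral_finsetSum]
    exact fun s _ => .of_bound (hky (q s)).aestronglyMeasurable B (.of_forall fun x => hB x (q s))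
  simp_rw [hin]
  rw [integral_const_mul, integral_sum_eval_pi ν P (measurable_integral_left ν hk)
    (fun y => norm_integral_le_of_bound ν fun x => hB x y)]
  ring

/-- Two-grid second moment of a bounded kernel, from the one-grid formula applied in `p` with `q`
frozen, and then in `q` to both resulting terms. The four terms count the pairs of index pairs
that share both indices, only `r`, only `s`, or none. -/
lemma two_grid_second_moment (ν : Measure E) [IsProbabilityMeasure ν] (P : ℕ) {k : E → E → ℂ}
    (hk : Measurable (Function.uncurry k)) {B : ℝ} (hB : ∀ x y, ‖k x y‖ ≤ B) :
    ∫ pq, normSq (∑ r, ∑ s, k (pq.1 r) (pq.2 s))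
        ∂((Measure.pi fun _ : Fin P => ν).prod (Measure.pi fun _ : Fin P => ν))
      = P ^ 2 * (∫ x, ∫ y, normSq (k x y) ∂ν ∂ν)
        + P ^ 2 * (P - 1) * ((∫ x, normSq (∫ y, k x y ∂ν) ∂ν) + ∫ y, normSq (∫ x, k x y ∂ν) ∂ν)
        + P ^ 2 * (P - 1) ^ 2 * normSq (∫ y, ∫ x, k x y ∂ν ∂ν) := by
  have hky : ∀ y, Measurable fun x => k x y := fun y => hk.comp measurable_prodMk_right
  have hkx : ∀ x, Measurable fun y => k x y := fun x => hk.comp measurable_prodMk_left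
  have hm : Measurable fun pq : (Fin P → E) × (Fin P → E) => ∑ r, ∑ s, k (pq.1 r) (pq.2 s) :=
    Finset.measurable_sum _ fun r _ => Finset.measurable_sum _ fun s _ =>
      hk.comp (by fun_prop : Measurable fun pq : (Fin P → E) × (Fin P → E) => (pq.1 r, pq.2 s))
  have hm1 : Measurable fun qx : (Fin P → E) × E => ∑ s, k qx.2 (qx.1 s) :=
    Finset.measurable_sum _ fun s _ =>
      hk.comp (by fun_prop : Measurable fun qx : (Fin P → E) × E => (qx.2, qx.1 s))
  have hmL : Measurable fun q : Fin P → E => ∑ s, ∫ x, k x (q s) ∂ν :=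
    Finset.measurable_sum _ fun s _ => (measurable_integral_left ν hk).comp (measurable_pi_apply s)
  have hsum : ∀ (q : Fin P → E) x, ‖∑ s, k x (q s)‖ ≤ P * B := fun q x =>
    (norm_sum_le_of_le _ fun s _ => hB x (q s)).trans (by simp)
  have hL : ∀ y, ‖∫ x, k x y ∂ν‖ ≤ B := fun y => norm_integral_le_of_bound ν fun x => hB x y
  rw [integral_prod_symm _ (integrable_normSq _ hm (B := P * (P * B)) fun pq =>
    (norm_sum_le_of_le _ fun r _ => hsum pq.2 (pq.1 r)).trans (by simp))]
  have hin : ∀ q : Fin P → E,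
      ∫ p, normSq (∑ r, ∑ s, k (p r) (q s)) ∂(Measure.pi fun _ : Fin P => ν)
      = P * (∫ x, normSq (∑ s, k x (q s)) ∂ν)
        + P * (P - 1) * normSq (∑ s, ∫ x, k x (q s) ∂ν) := by
    intro q
    rw [integral_normSq_sum_eval_pi ν P (φ := fun x => ∑ s, k x (q s))
      (Finset.measurable_sum _ fun s _ => hky (q s)) (hsum q), integral_finsetSum]
    exact fun s _ => .of_bound (hky (q s)).aestronglyMeasurable B (.of_forall fun x => hB x (q s))
  simp_rw [hin]
  have hJ : Integrable (Function.uncurry fun (q : Fin P → E) x => normSq (∑ s, k x (q s)))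
      ((Measure.pi fun _ : Fin P => ν).prod ν) :=
    integrable_normSq _ hm1 fun qx => hsum qx.1 qx.2
  have hJ2 : Integrable (fun q : Fin P → E => normSq (∑ s, ∫ x, k x (q s) ∂ν))
      (Measure.pi fun _ : Fin P => ν) :=
    integrable_normSq _ hmL (B := P * B) fun q =>
      (norm_sum_le_of_le _ fun s _ => hL (q s)).trans (by simp)
  have hK1 : Integrable (fun x => ∫ y, normSq (k x y) ∂ν) ν :=
    Integrable.integral_prod_left (f := fun xy : E × E => normSq (k xy.1 xy.2))
      (integrable_normSq _ hk fun xy => hB xy.1 xy.2)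
  have hK2 : Integrable (fun x => normSq (∫ y, k x y ∂ν)) ν :=
    integrable_normSq _ (measurable_integral_right ν hk) fun x =>
      norm_integral_le_of_bound ν fun y => hB x y
  have hJ1 : Integrable (fun q : Fin P → E => ∫ x, normSq (∑ s, k x (q s)) ∂ν)
      (Measure.pi fun _ : Fin P => ν) := hJ.integral_prod_left
  rw [integral_add (hJ1.const_mul _) (hJ2.const_mul _), integral_const_mul,
    integral_const_mul, integral_integral_swap hJ,
    integral_normSq_sum_eval_pi ν P (measurable_integral_left ν hk) hL]
  simp_rw [integral_normSq_sum_eval_pi ν P (hkx _) (hB _)]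
  rw [integral_add (hK1.const_mul _) (hK2.const_mul _), integral_const_mul, integral_const_mul]
  ring

/-- Variance of the two-grid average of `K(x, y) - h(x)`. The terms in `h` occur both in
`E|K - h|²` (weight `1 / P²`) and in `E_x |E_y (K - h)|²` (weight `(P - 1) / P²`), hence with total
weight `1 / P`. -/
lemma two_grid_variance (ν : Measure E) [IsProbabilityMeasure ν] {P : ℕ} (hP : 0 < P)
    {K : E → E → ℂ} {h : E → ℂ}
    (hK : Measurable (Function.uncurry K)) (hh : Measurable h) {B B' : ℝ}
    (hB : ∀ x y, ‖K x y‖ ≤ B) (hB' : ∀ x, ‖h x‖ ≤ B') :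
    (∫ pq, normSq ((∑ r, ∑ s, (K (pq.1 r) (pq.2 s) - h (pq.1 r))) / (P : ℂ) ^ 2)
        ∂((Measure.pi fun _ : Fin P => ν).prod (Measure.pi fun _ : Fin P => ν)))
      - normSq (∫ pq, (∑ r, ∑ s, (K (pq.1 r) (pq.2 s) - h (pq.1 r))) / (P : ℂ) ^ 2
        ∂((Measure.pi fun _ : Fin P => ν).prod (Measure.pi fun _ : Fin P => ν)))
      = 1 / (P : ℝ) ^ 2 * (∫ x, ∫ y, normSq (K x y) ∂ν ∂ν)
        + 1 / (P : ℝ) * ((P - 1) / P * ((∫ y, normSq (∫ x, K x y ∂ν) ∂ν)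
            + ∫ x, normSq (∫ y, K x y ∂ν) ∂ν)
          + (∫ x, (normSq (h x) - 2 * ((∫ y, K x y ∂ν) * (starRingEnd ℂ) (h x)).re) ∂ν)
          + 2 * ((∫ x, h x ∂ν) * (starRingEnd ℂ) (∫ y, ∫ x, K x y ∂ν ∂ν)).re
          - normSq (∫ x, h x ∂ν)
          - (2 * P - 1) / P * normSq (∫ y, ∫ x, K x y ∂ν ∂ν)) := by
  have hns : Measurable (normSq : ℂ → ℝ) := continuous_normSq.measurable
  have hk : Measurable (Function.uncurry fun x y => K x y - h x) :=
    hK.sub (hh.comp measurable_fst)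
  have hkB : ∀ x y, ‖K x y - h x‖ ≤ B + B' := fun x y =>
    (norm_sub_le _ _).trans (add_le_add (hB x y) (hB' x))
  have hKx : ∀ x, Measurable fun y => K x y := fun x => hK.comp measurable_prodMk_left
  have hKy : ∀ y, Measurable fun x => K x y := fun y => hK.comp measurable_prodMk_right
  have hR := measurable_integral_right ν hK
  have hL := measurable_integral_left ν hK
  have iKx : ∀ x, Integrable (fun y => K x y) ν := fun x =>
    .of_bound (hKx x).aestronglyMeasurable B (.of_forall (hB x))
  have iKy : ∀ y, Integrable (fun x => K x y) ν := fun y =>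
    .of_bound (hKy y).aestronglyMeasurable B (.of_forall fun x => hB x y)
  have ih : Integrable h ν := .of_bound hh.aestronglyMeasurable B' (.of_forall hB')
  have bR : ∀ x, ‖∫ y, K x y ∂ν‖ ≤ B := fun x => norm_integral_le_of_bound ν (hB x)
  have bL : ∀ y, ‖∫ x, K x y ∂ν‖ ≤ B := fun y => norm_integral_le_of_bound ν fun x => hB x y
  have iL : Integrable (fun y => ∫ x, K x y ∂ν) ν :=
    .of_bound hL.aestronglyMeasurable B (.of_forall bL)
  have e1 : ∀ x, ∫ y, (K x y - h x) ∂ν = (∫ y, K x y ∂ν) - h x := fun x => by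
    rw [integral_sub (iKx x) (integrable_const _)]; simp
  have e2 : ∀ y, ∫ x, (K x y - h x) ∂ν = (∫ x, K x y ∂ν) - ∫ x, h x ∂ν := fun y =>
    integral_sub (iKy y) ih
  have e3 : ∫ y, ∫ x, (K x y - h x) ∂ν ∂ν = (∫ y, ∫ x, K x y ∂ν ∂ν) - ∫ x, h x ∂ν := by
    simp_rw [e2]
    rw [integral_sub iL (integrable_const _)]; simp
  -- The terms of `|K₁ x - h x|²` that involve `h`, where `K₁ x = ∫ y, K x y`.
  have iT : Integrable
      (fun x => normSq (h x) - 2 * ((∫ y, K x y ∂ν) * (starRingEnd ℂ) (h x)).re) ν := by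
    refine .of_bound (Measurable.aestronglyMeasurable ?_) (B' ^ 2 + 2 * (B * B'))
      (.of_forall fun x => ?_)
    · exact (hns.comp hh).sub (measurable_const.mul
        (measurable_re.comp (hR.mul (by fun_prop))))
    · refine (norm_sub_le _ _).trans (add_le_add (normSq_le_of_norm_le (hB' x)) ?_)
      rw [norm_mul, Real.norm_ofNat]
      refine mul_le_mul_of_nonneg_left ((abs_re_le_norm _).trans ?_) zero_le_two
      rw [norm_mul, RCLike.norm_conj]
      exact mul_le_mul (bR x) (hB' x) (norm_nonneg _) ((norm_nonneg _).trans (bR x))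
  have iNK2 : Integrable (fun x => ∫ y, normSq (K x y) ∂ν) ν :=
    Integrable.integral_prod_left (f := fun xy : E × E => normSq (K xy.1 xy.2))
      (integrable_normSq _ hK fun xy => hB xy.1 xy.2)
  have A : ∫ x, ∫ y, normSq (K x y - h x) ∂ν ∂ν = (∫ x, ∫ y, normSq (K x y) ∂ν ∂ν)
      + ∫ x, (normSq (h x) - 2 * ((∫ y, K x y ∂ν) * (starRingEnd ℂ) (h x)).re) ∂ν := by
    rw [← integral_add iNK2 iT]
    congr 1 with x
    rw [integral_normSq_sub_const ν (hKx x) (hB x)]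
    ring
  have B1 : ∫ x, normSq (∫ y, (K x y - h x) ∂ν) ∂ν = (∫ x, normSq (∫ y, K x y ∂ν) ∂ν)
      + ∫ x, (normSq (h x) - 2 * ((∫ y, K x y ∂ν) * (starRingEnd ℂ) (h x)).re) ∂ν := by
    rw [← integral_add (integrable_normSq ν hR bR) iT]
    congr 1 with x
    rw [e1, normSq_sub]
    ring
  have B2 : ∫ y, normSq (∫ x, (K x y - h x) ∂ν) ∂ν = (∫ y, normSq (∫ x, K x y ∂ν) ∂ν)
      + normSq (∫ x, h x ∂ν)
      - 2 * ((∫ y, ∫ x, K x y ∂ν ∂ν) * (starRingEnd ℂ) (∫ x, h x ∂ν)).re := by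
    simp_rw [e2]
    exact integral_normSq_sub_const ν hL bL _
  have hP' : (P : ℝ) ≠ 0 := by positivity
  have hPc : (P : ℂ) ≠ 0 := by exact_mod_cast hP.ne'
  rw [integral_div, two_grid_mean ν P hk hkB, mul_div_cancel_left₀ _ (pow_ne_zero 2 hPc), e3]
  simp_rw [normSq_div]
  rw [integral_div, two_grid_second_moment ν P hk hkB, A, B1, B2, e3, map_pow, normSq_natCast,
    normSq_sub]
  generalize (∫ y, ∫ x, K x y ∂ν ∂ν) = κ
  generalize (∫ x, h x ∂ν) = η
  have hs : (η * (starRingEnd ℂ) κ).re = (κ * (starRingEnd ℂ) η).re := by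
    simp only [mul_re, conj_re, conj_im]; ring
  rw [hs]
  field_simp
  ring

end Grid

section Sketch

/-! ### The sketching operator and its adjoint -/

variable {d m : ℕ} (ω : Fin m → Fin d → ℝ)

lemma measurable_ip (w : Fin d → ℝ) : Measurable (ip w) := by
  unfold ip; fun_prop

lemma ip_sub (w x y : Fin d → ℝ) : ip w (x - y) = ip w x - ip w y := by
  simp [ip, mul_sub]

lemma measurable_Sstar (c : Fin m → ℂ) : Measurable (Sstar m ω c) := by
  have := fun g => measurable_ip (ω g)
  unfold Sstar; fun_prop

lemma norm_Sstar_le (c : Fin m → ℂ) (x : Fin d → ℝ) : ‖Sstar m ω c x‖ ≤ ∑ g, ‖c g‖ :=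
  norm_sum_le_of_le _ fun g _ => by rw [norm_mul, norm_exp_I_mul_ofReal, mul_one]

lemma conj_exp_I_mul (t : ℝ) : (starRingEnd ℂ) (cexp (I * t)) = cexp (-I * t) := by
  rw [← exp_conj]; simp

lemma conj_exp_neg_I_mul (t : ℝ) : (starRingEnd ℂ) (cexp (-I * t)) = cexp (I * t) := by
  rw [← exp_conj]; simp

lemma Sstar_one_sub (x y : Fin d → ℝ) :
    Sstar m ω (fun _ => 1) (x - y)
      = ∑ g, cexp (I * (ip (ω g) x : ℂ)) * cexp (-I * (ip (ω g) y : ℂ)) := by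
  refine Finset.sum_congr rfl fun g _ => ?_
  rw [one_mul, ip_sub, ← Complex.exp_add]
  push_cast
  ring_nf

/-- Adjointness of `S*` and `S`: `⟨μ, S*c⟩_{L²(D)} = ⟨Sμ, c⟩`. -/
lemma integral_mul_conj_Sstar {D : Set (Fin d → ℝ)} {μ : (Fin d → ℝ) → ℂ}
    (hμ : IntegrableOn μ D) (c : Fin m → ℂ) :
    ∫ x in D, μ x * (starRingEnd ℂ) (Sstar m ω c x) = hinn (sk m ω D μ) c := by
  simp only [Sstar, map_sum, map_mul, conj_exp_I_mul, Finset.mul_sum, hinn, sk]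
  rw [integral_finsetSum]
  · refine Finset.sum_congr rfl fun l _ => ?_
    rw [← integral_mul_const]
    congr 1 with x
    ring
  · intro l _
    have hl := measurable_ip (ω l)
    refine hμ.mul_bdd (c := ‖c l‖) (Measurable.aestronglyMeasurable (by fun_prop))
      (.of_forall fun x => ?_)
    rw [norm_mul, RCLike.norm_conj, ← conj_exp_I_mul, RCLike.norm_conj, norm_exp_I_mul_ofReal,
      mul_one]

/-- Adjointness for a real density, conjugated: `∫_D μ S*c = ⟨c, Sμ⟩`. -/
lemma integral_mul_Sstar {D : Set (Fin d → ℝ)} {μ : (Fin d → ℝ) → ℝ}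
    (hμ : IntegrableOn (fun x => (μ x : ℂ)) D) (c : Fin m → ℂ) :
    ∫ x in D, (μ x : ℂ) * Sstar m ω c x = hinn c (sk m ω D fun x => (μ x : ℂ)) := by
  have h := congrArg (starRingEnd ℂ) (integral_mul_conj_Sstar ω hμ c)
  rw [← integral_conj] at h
  simpa [hinn, mul_comm] using h

/-- The estimator as an average over both grids. The term in `z` does not depend on `s`, so the sum
over `s` multiplies it by `P`, which turns its weight `1 / P` into `1 / P²`. -/
lemma hinn_dsk {P : ℕ} (hP : 0 < P) (μ₁ μ₂ : (Fin d → ℝ) → ℝ) (z : Fin m → ℂ)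
    (p q : Fin P → Fin d → ℝ) :
    hinn (dsk m P ω (fun x => (μ₁ x : ℂ)) p) (dsk m P ω (fun x => (μ₂ x : ℂ)) q - z)
      = (∑ r, ∑ s, ((μ₁ (p r) : ℂ) * μ₂ (q s) *
            (starRingEnd ℂ) (Sstar m ω (fun _ => 1) (p r - q s))
          - μ₁ (p r) * (starRingEnd ℂ) (Sstar m ω z (p r)))) / (P : ℂ) ^ 2 := by
  have hPc : (P : ℂ) ≠ 0 := by exact_mod_cast hP.ne'
  simp only [Sstar_one_sub]
  simp only [Sstar, map_sum, map_mul, conj_exp_I_mul, conj_exp_neg_I_mul]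
  have e : ∀ r s, (μ₁ (p r) : ℂ) * μ₂ (q s) *
        (∑ g, cexp (-I * (ip (ω g) (p r) : ℂ)) * cexp (I * (ip (ω g) (q s) : ℂ)))
      - μ₁ (p r) * ∑ g, (starRingEnd ℂ) (z g) * cexp (-I * (ip (ω g) (p r) : ℂ))
      = ∑ g, (cexp (-I * (ip (ω g) (p r) : ℂ)) * μ₁ (p r)) *
          (cexp (I * (ip (ω g) (q s) : ℂ)) * μ₂ (q s) - (starRingEnd ℂ) (z g)) := by
    intro r s
    rw [Finset.mul_sum, Finset.mul_sum, ← Finset.sum_sub_distrib]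
    exact Finset.sum_congr rfl fun g _ => by ring
  simp_rw [e]
  rw [Finset.sum_congr rfl fun r _ => Finset.sum_comm, Finset.sum_comm, Finset.sum_div]
  refine Finset.sum_congr rfl fun g _ => ?_
  rw [← Finset.sum_mul_sum]
  simp only [dsk, Pi.sub_apply, map_sub, map_div₀, map_sum, map_mul, conj_exp_neg_I_mul,
    conj_ofReal, conj_natCast, Finset.sum_sub_distrib, Finset.sum_const, Finset.card_univ,
    Fintype.card_fin, nsmul_eq_mul]
  field_simp

end Sketch

/-! ### The variance formula -/

/-- Lemma variance: the variance of `Z = ⟨B_pμ₁(p), B_qμ₂(q) − ẑ⟩` equals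
`(1/P²)⟨|μ₁|²,|μ₂|²⟩_{L²,|S*𝟏|²} + (1/P)·C(μ₁,μ₂,ẑ)`, with `C` as in the paper. -/
theorem variance_two_grid_estimator
    (d P m : ℕ) (hP : 0 < P)
    (D : Set (Fin d → ℝ)) (hD : MeasurableSet D) (hD1 : volume D = 1)
    (ω : Fin m → Fin d → ℝ) (z : Fin m → ℂ)
    (μ₁ μ₂ : (Fin d → ℝ) → ℝ) (hm1 : Measurable μ₁) (hm2 : Measurable μ₂)
    (M : ℝ) (hb1 : ∀ x ∈ D, |μ₁ x| ≤ M) (hb2 : ∀ x ∈ D, |μ₂ x| ≤ M) :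
    letI Sμ₁ : Fin m → ℂ := sk m ω D (fun x => (μ₁ x : ℂ))
    letI Sμ₂ : Fin m → ℂ := sk m ω D (fun x => (μ₂ x : ℂ))
    letI Z : (Fin P → (Fin d → ℝ)) × (Fin P → (Fin d → ℝ)) → ℂ :=
      fun pq => hinn (dsk m P ω (fun x => (μ₁ x : ℂ)) pq.1)
                     (dsk m P ω (fun x => (μ₂ x : ℂ)) pq.2 - z)
    letI π2 : Measure ((Fin P → (Fin d → ℝ)) × (Fin P → (Fin d → ℝ))) :=
      Measure.prod (Measure.pi fun _ : Fin P => volume.restrict D)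
                   (Measure.pi fun _ : Fin P => volume.restrict D)
    letI C : ℝ :=
      (((P : ℝ) - 1) / (P : ℝ)) *
          ((∫ x in D, Complex.normSq (Sstar m ω Sμ₁ x) * (μ₂ x) ^ 2)
            + (∫ x in D, Complex.normSq (Sstar m ω Sμ₂ x) * (μ₁ x) ^ 2))
        + (∫ x in D,
            (((Complex.normSq (Sstar m ω z x) : ℂ)
               - 2 * Sstar m ω z x * (starRingEnd ℂ) (Sstar m ω Sμ₂ x)) *
              (starRingEnd ℂ) (((μ₁ x : ℂ)) ^ 2))).re
        + 2 * (hinn Sμ₁ z * (starRingEnd ℂ) (hinn Sμ₁ Sμ₂)).re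
        - Complex.normSq (hinn Sμ₁ z)
        - ((2 * (P : ℝ) - 1) / (P : ℝ)) * Complex.normSq (hinn Sμ₁ Sμ₂)
    (∫ pq, Complex.normSq (Z pq) ∂π2) - Complex.normSq (∫ pq, Z pq ∂π2)
      = (1 / (P : ℝ) ^ 2) *
          (∫ x in D, ∫ y in D,
            (μ₁ x) ^ 2 * (μ₂ y) ^ 2 *
              Complex.normSq (Sstar m ω (fun _ => (1 : ℂ)) (x - y)))
        + (1 / (P : ℝ)) * C := by
  set Sμ₁ : Fin m → ℂ := sk m ω D (fun x => (μ₁ x : ℂ)) with hSμ₁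
  set Sμ₂ : Fin m → ℂ := sk m ω D (fun x => (μ₂ x : ℂ)) with hSμ₂
  have : IsProbabilityMeasure (volume.restrict D) := ⟨by simp [hD1]⟩
  have hM : 0 ≤ M := by
    have hne : D.Nonempty := by
      by_contra h
      simp [Set.not_nonempty_iff_eq_empty.1 h] at hD1
    obtain ⟨x, hx⟩ := hne
    exact (abs_nonneg _).trans (hb1 x hx)
  -- The densities are bounded on `D` only; cutting them off outside `D` makes the kernels bounded
  -- everywhere and changes none of the integrals.
  set ν₁ : (Fin d → ℝ) → ℝ := D.indicator μ₁ with hν₁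
  set ν₂ : (Fin d → ℝ) → ℝ := D.indicator μ₂ with hν₂
  have mν₁ : Measurable ν₁ := hm1.indicator hD
  have mν₂ : Measurable ν₂ := hm2.indicator hD
  have bν : ∀ {f : (Fin d → ℝ) → ℝ}, (∀ x ∈ D, |f x| ≤ M) → ∀ x, ‖((D.indicator f x : ℝ) : ℂ)‖ ≤ M := by
    intro f hf x
    by_cases hx : x ∈ D
    · simpa [hx] using hf x hx
    · simpa [hx] using hM
  have e₁ : ∀ x ∈ D, ν₁ x = μ₁ x := fun x hx => Set.indicator_of_mem hx _
  have e₂ : ∀ x ∈ D, ν₂ x = μ₂ x := fun x hx => Set.indicator_of_mem hx _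
  have i₁ : IntegrableOn (fun x => (μ₁ x : ℂ)) D :=
    Integrable.of_bound (by fun_prop) M (ae_restrict_of_forall_mem hD fun x hx => by simpa using hb1 x hx)
  have i₂ : IntegrableOn (fun x => (μ₂ x : ℂ)) D :=
    Integrable.of_bound (by fun_prop) M (ae_restrict_of_forall_mem hD fun x hx => by simpa using hb2 x hx)
  let K : (Fin d → ℝ) → (Fin d → ℝ) → ℂ := fun x y =>
    (ν₁ x : ℂ) * ν₂ y * (starRingEnd ℂ) (Sstar m ω (fun _ => 1) (x - y))
  let h : (Fin d → ℝ) → ℂ := fun x => (ν₁ x : ℂ) * (starRingEnd ℂ) (Sstar m ω z x)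
  have mK : Measurable (Function.uncurry K) := by
    have := measurable_Sstar ω (fun _ => (1 : ℂ))
    unfold K Function.uncurry; fun_prop
  have mh : Measurable h := by
    have := measurable_Sstar ω z
    unfold h; fun_prop
  have bK : ∀ x y, ‖K x y‖ ≤ M * M * ∑ _g : Fin m, ‖(1 : ℂ)‖ := by
    intro x y
    rw [norm_mul, norm_mul, RCLike.norm_conj]
    have := bν hb1 x
    have := bν hb2 y
    have := norm_Sstar_le ω (fun _ => (1 : ℂ)) (x - y)
    gcongr
  have bh : ∀ x, ‖h x‖ ≤ M * ∑ g, ‖z g‖ := by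
    intro x
    rw [norm_mul, RCLike.norm_conj]
    have := bν hb1 x
    have := norm_Sstar_le ω z x
    gcongr
  have hgrid : ∀ᵐ p ∂(Measure.pi fun _ : Fin P => volume.restrict D), ∀ r, p r ∈ D :=
    ae_all_iff.2 fun r => (measurePreserving_eval (fun _ : Fin P => volume.restrict D)
      r).quasiMeasurePreserving.ae (ae_restrict_mem hD)
  have hZ : ∀ᵐ pq ∂(Measure.pi fun _ : Fin P => volume.restrict D).prod
        (Measure.pi fun _ : Fin P => volume.restrict D),
      hinn (dsk m P ω (fun x => (μ₁ x : ℂ)) pq.1) (dsk m P ω (fun x => (μ₂ x : ℂ)) pq.2 - z)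
        = (∑ r, ∑ s, (K (pq.1 r) (pq.2 s) - h (pq.1 r))) / (P : ℂ) ^ 2 := by
    filter_upwards [Measure.quasiMeasurePreserving_fst.ae hgrid,
      Measure.quasiMeasurePreserving_snd.ae hgrid] with pq h1 h2
    simp only [hinn_dsk ω hP, K, h, e₁ _ (h1 _), e₂ _ (h2 _)]
  have hKl : ∀ y ∈ D, ∫ x in D, K x y = μ₂ y * Sstar m ω Sμ₁ y := by
    intro y hy
    -- As a function of `x`, `S*𝟏 (x - y)` is `S*c (x)` with `c_g = e^{-i⟨ω_g, y⟩}`.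
    have : ∀ x ∈ D, K x y = μ₂ y * (μ₁ x *
        (starRingEnd ℂ) (Sstar m ω (fun g => cexp (-I * (ip (ω g) y : ℂ))) x)) := by
      intro x hx
      simp only [K, e₁ x hx, e₂ y hy, Sstar_one_sub]
      simp only [Sstar]
      simp_rw [mul_comm (cexp (-I * _))]
      ring
    rw [setIntegral_congr_fun hD this, integral_const_mul, integral_mul_conj_Sstar ω i₁]
    simp only [hinn, conj_exp_neg_I_mul]
    rfl
  have hKr : ∀ x ∈ D, ∫ y in D, K x y = μ₁ x * (starRingEnd ℂ) (Sstar m ω Sμ₂ x) := by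
    intro x hx
    -- As a function of `y`, `conj (S*𝟏 (x - y))` is `S*c (y)` with `c_g = e^{-i⟨ω_g, x⟩}`.
    have : ∀ y ∈ D, K x y = μ₁ x * (μ₂ y *
        Sstar m ω (fun g => cexp (-I * (ip (ω g) x : ℂ))) y) := by
      intro y hy
      simp only [K, e₁ x hx, e₂ y hy, Sstar_one_sub]
      simp only [Sstar, map_sum, map_mul, conj_exp_I_mul, conj_exp_neg_I_mul]
      ring
    rw [setIntegral_congr_fun hD this, integral_const_mul, integral_mul_Sstar ω i₂]
    simp only [hinn, Sstar, map_sum, map_mul, conj_exp_I_mul]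
    simp_rw [mul_comm (cexp (-I * _))]
    rfl
  have hη : ∫ x in D, h x = hinn Sμ₁ z := by
    rw [← integral_mul_conj_Sstar ω i₁]
    exact setIntegral_congr_fun hD fun x hx => by simp only [h, e₁ x hx]
  have hκ : ∫ y in D, ∫ x in D, K x y = hinn Sμ₁ Sμ₂ := by
    rw [← integral_mul_Sstar ω i₂]
    exact setIntegral_congr_fun hD hKl
  have hKK : ∫ x in D, ∫ y in D, normSq (K x y)
      = ∫ x in D, ∫ y in D, (μ₁ x) ^ 2 * (μ₂ y) ^ 2 *
          normSq (Sstar m ω (fun _ => (1 : ℂ)) (x - y)) :=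
    setIntegral_congr_fun hD fun x hx => setIntegral_congr_fun hD fun y hy => by
      simp only [K, e₁ x hx, e₂ y hy, normSq_mul, normSq_conj, normSq_ofReal, sq]
  have hL2 : ∫ y in D, normSq (∫ x in D, K x y)
      = ∫ x in D, normSq (Sstar m ω Sμ₁ x) * (μ₂ x) ^ 2 :=
    setIntegral_congr_fun hD fun y hy => by
      simp only [hKl y hy, normSq_mul, normSq_ofReal]
      ring
  have hR2 : ∫ x in D, normSq (∫ y in D, K x y)
      = ∫ x in D, normSq (Sstar m ω Sμ₂ x) * (μ₁ x) ^ 2 :=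
    setIntegral_congr_fun hD fun x hx => by
      simp only [hKr x hx, normSq_mul, normSq_conj, normSq_ofReal]
      ring
  have hcross : ∫ x in D, (normSq (h x)
        - 2 * ((∫ y in D, K x y) * (starRingEnd ℂ) (h x)).re)
      = (∫ x in D, (((normSq (Sstar m ω z x) : ℂ)
          - 2 * Sstar m ω z x * (starRingEnd ℂ) (Sstar m ω Sμ₂ x)) *
            (starRingEnd ℂ) (((μ₁ x : ℂ)) ^ 2))).re := by
    have hint : IntegrableOn (fun x => ((normSq (Sstar m ω z x) : ℂ)
          - 2 * Sstar m ω z x * (starRingEnd ℂ) (Sstar m ω Sμ₂ x)) *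
            (starRingEnd ℂ) (((μ₁ x : ℂ)) ^ 2)) D := by
      have m1 := measurable_Sstar ω z
      have m2 := measurable_Sstar ω Sμ₂
      have m3 : Measurable (normSq : ℂ → ℝ) := continuous_normSq.measurable
      refine Integrable.of_bound (Measurable.aestronglyMeasurable (by fun_prop))
        (((∑ g, ‖z g‖) ^ 2 + 2 * (∑ g, ‖z g‖) * ∑ g, ‖Sμ₂ g‖) * M ^ 2)
        (ae_restrict_of_forall_mem hD fun x hx => ?_)
      have b1 := norm_Sstar_le ω z x
      have b2 := norm_Sstar_le ω Sμ₂ x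
      have b3 := hb1 x hx
      rw [norm_mul, RCLike.norm_conj, norm_pow, norm_real, Real.norm_eq_abs]
      gcongr
      refine (norm_sub_le _ _).trans (add_le_add ?_ ?_)
      · rw [norm_real]
        exact normSq_le_of_norm_le b1
      · rw [norm_mul, norm_mul, RCLike.norm_conj, RCLike.norm_ofNat]
        gcongr
    refine Eq.trans (setIntegral_congr_fun hD fun x hx => ?_) (integral_re hint)
    simp only [hKr x hx, h, e₁ x hx, normSq_mul, normSq_conj, normSq_ofReal]
    simp [← ofReal_pow]
    ring
  have key := two_grid_variance (volume.restrict D) hP mK mh bK bh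
  rw [hη, hκ, hKK, hL2, hR2, hcross] at key
  rw [integral_congr_ae hZ, integral_congr_ae (hZ.mono fun pq e => congrArg normSq e)]
  exact key
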